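/- Let Z : LC(ℝ) → ℝ be a simple, τ-upper semicontinuous, translation invariant and dually epi-translation invariant valuation that vanishes on indicator functions of closed intervals. Then Z(u) ≥ 0 for every u ∈ LC(ℝ). -/

import Mathlib

open MeasureTheory Filter Topology Pointwise Asymptotics

noncomputable section

variable {E : Type*} [NormedAddCommGroup E] [NormedSpace ℝ E]

/-- The effective domain of an extended-real-valued function. -/
def edom (u : E → EReal) : Set E := {x | u x < ⊤}

/-- `u` has Lipschitz constant `L` on the interior of its domain. -/
def LipBound (u : E → EReal) (L : ℝ) : Prop :=
  ∀ x ∈ interior (edom u), ∀ y ∈ interior (edom u),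
    |(u x).toReal - (u y).toReal| ≤ L * ‖x - y‖

/-- Membership in `LC`: proper, lower semicontinuous, convex, compact domain,
Lipschitz on the interior of the domain. -/
def IsLC (u : E → EReal) : Prop :=
  (∀ x y : E, ∀ t : ℝ, 0 < t → t < 1 →
      u (t • x + (1 - t) • y) ≤ (t : EReal) * u x + ((1 - t : ℝ) : EReal) * u y) ∧
  LowerSemicontinuous u ∧
  (∀ x, u x ≠ ⊥) ∧
  (∃ x, u x ≠ ⊤) ∧
  IsCompact (edom u) ∧
  (∃ L : ℝ, 0 < L ∧ LipBound u L)

/-- τ-convergence: epi-convergence together with uniformly bounded Lipschitz constants. -/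
def TauConv (uk : ℕ → E → EReal) (u : E → EReal) : Prop :=
  (∀ k, IsLC (uk k)) ∧ IsLC u ∧
  (∀ (x : E) (xk : ℕ → E), Tendsto xk atTop (𝓝 x) →
      u x ≤ liminf (fun k => uk k (xk k)) atTop) ∧
  (∀ x : E, ∃ xk : ℕ → E, Tendsto xk atTop (𝓝 x) ∧
      Tendsto (fun k => uk k (xk k)) atTop (𝓝 (u x))) ∧
  (∃ M : ℝ, 0 < M ∧ ∀ k, LipBound (uk k) M)

/-- Valuation property on `LC`. -/
def IsVal (Z : (E → EReal) → ℝ) : Prop :=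
  ∀ u v : E → EReal, IsLC u → IsLC v → IsLC (fun x => min (u x) (v x)) →
    Z (fun x => min (u x) (v x)) + Z (fun x => max (u x) (v x)) = Z u + Z v

/-- τ-upper semicontinuity. -/
def TauUSC (Z : (E → EReal) → ℝ) : Prop :=
  ∀ (uk : ℕ → E → EReal) (u : E → EReal), TauConv uk u →
    limsup (fun k => Z (uk k)) atTop ≤ Z u

/-- τ-continuity. -/
def TauCont (Z : (E → EReal) → ℝ) : Prop :=
  ∀ (uk : ℕ → E → EReal) (u : E → EReal), TauConv uk u →
    Tendsto (fun k => Z (uk k)) atTop (𝓝 (Z u))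

/-- Translation invariance. -/
def TransInv (Z : (E → EReal) → ℝ) : Prop :=
  ∀ u : E → EReal, IsLC u → ∀ y : E, Z (fun x => u (x - y)) = Z u

/-- Dual epi-translation invariance. -/
def DualTransInv (Z : (E → EReal) → ℝ) : Prop :=
  ∀ u : E → EReal, IsLC u → ∀ (l : E →ₗ[ℝ] ℝ) (c : ℝ),
    Z (fun x => u x + ((l x + c : ℝ) : EReal)) = Z u

/-- SL_n invariance. -/
def SLInv (Z : (E → EReal) → ℝ) : Prop :=
  ∀ u : E → EReal, IsLC u → ∀ φ : E →ₗ[ℝ] E, LinearMap.det φ = 1 →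
    Z (fun x => u (φ x)) = Z u

/-- The class `Conc`. -/
def IsConc (ζ : ℝ → ℝ) : Prop :=
  (∀ t ∈ Set.Ici (0 : ℝ), 0 ≤ ζ t) ∧ ConcaveOn ℝ (Set.Ici 0) ζ ∧
  Tendsto ζ (𝓝[>] 0) (𝓝 0) ∧
  Tendsto (fun t => ζ t / t) atTop (𝓝 0)

open Classical in
/-- `(∞-valued) indicator function` of a set. -/
noncomputable def eIndicator (K : Set E) : E → EReal := fun x =>
  if x ∈ K then (0 : EReal) else ⊤

/-- Real part of an extended-real-valued function. -/
def toRealFn (u : E → EReal) : E → ℝ := fun x => (u x).toReal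

open Classical in
/-- Second derivative of `u`, set to `0` where `u` is not twice differentiable. -/
noncomputable def secondDeriv (u : ℝ → EReal) : ℝ → ℝ := fun x =>
  if DifferentiableAt ℝ (toRealFn u) x ∧ DifferentiableAt ℝ (deriv (toRealFn u)) x
  then deriv (deriv (toRealFn u)) x
  else 0

open Classical in
/-- restriction of a real function to an interval -/
def RI (g : ℝ → ℝ) (a b : ℝ) : ℝ → EReal := fun x =>
  if x ∈ Set.Icc a b then ((g x : ℝ) : EReal) else ⊤

lemma RI_in {g : ℝ → ℝ} {a b x : ℝ} (h : x ∈ Set.Icc a b) : RI g a b x = ((g x : ℝ) : EReal) :=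
  if_pos h

lemma RI_out {g : ℝ → ℝ} {a b x : ℝ} (h : x ∉ Set.Icc a b) : RI g a b x = ⊤ :=
  if_neg h

lemma RI_ge (g : ℝ → ℝ) (a b x : ℝ) : ((g x : ℝ) : EReal) ≤ RI g a b x := by
  by_cases h : x ∈ Set.Icc a b
  · rw [RI_in h]
  · rw [RI_out h]; exact le_top

lemma RI_edom (g : ℝ → ℝ) (a b : ℝ) : edom (RI g a b) = Set.Icc a b := by
  ext x
  by_cases h : x ∈ Set.Icc a b
  · simp only [edom, Set.mem_ofPred_eq, RI_in h, h, iff_true]; exact EReal.coe_lt_top _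
  · simp only [edom, Set.mem_ofPred_eq, RI_out h, h, iff_false]; exact lt_irrefl _

lemma RI_ne_bot (g : ℝ → ℝ) (a b x : ℝ) : RI g a b x ≠ ⊥ := by
  have := RI_ge g a b x
  intro h
  rw [h] at this
  simp at this

lemma RI_lip {g : ℝ → ℝ} {L : ℝ} (hl : ∀ x y, |g x - g y| ≤ L * |x - y|) (a b : ℝ) :
    LipBound (RI g a b) L := by
  intro x hx y hy
  rw [RI_edom] at hx hy
  rw [RI_in (interior_subset hx), RI_in (interior_subset hy)]
  exact hl x y

lemma cont_of_lip {g : ℝ → ℝ} {L : ℝ} (hl : ∀ x y, |g x - g y| ≤ L * |x - y|) :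
    Continuous g := by
  have : LipschitzWith (Real.toNNReal L) g := by
    apply LipschitzWith.of_dist_le_mul
    intro x y
    rw [Real.dist_eq, Real.dist_eq]
    refine (hl x y).trans ?_
    gcongr
    exact Real.le_coe_toNNReal L
  exact this.continuous

lemma RI_LC {g : ℝ → ℝ} {L : ℝ} (hL : 0 < L) (hl : ∀ x y, |g x - g y| ≤ L * |x - y|)
    (hc : ConvexOn ℝ Set.univ g) {a b : ℝ} (hab : a ≤ b) : IsLC (RI g a b) := by
  refine ⟨?_, ?_, RI_ne_bot g a b, ?_, ?_, L, hL, RI_lip hl a b⟩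
  · intro x y t ht ht1
    by_cases hx : x ∈ Set.Icc a b
    · by_cases hy : y ∈ Set.Icc a b
      · have hm : t • x + (1 - t) • y ∈ Set.Icc a b :=
          (convex_Icc a b) hx hy ht.le (by linarith) (by ring)
        rw [RI_in hx, RI_in hy, RI_in hm]
        have := hc.2 (Set.mem_univ x) (Set.mem_univ y) ht.le (by linarith : 0 ≤ 1 - t) (by ring)
        simp only [smul_eq_mul] at this ⊢
        exact_mod_cast this
      · rw [RI_out hy, EReal.coe_mul_top_of_pos (by linarith), RI_in hx]
        rw [← EReal.coe_mul, EReal.coe_add_top]; exact le_top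
    · rw [RI_out hx, EReal.coe_mul_top_of_pos ht, EReal.top_add_of_ne_bot]
      · exact le_top
      · by_cases hy : y ∈ Set.Icc a b
        · rw [RI_in hy, ← EReal.coe_mul]; exact EReal.coe_ne_bot _
        · rw [RI_out hy, EReal.coe_mul_top_of_pos (by linarith)]; simp
  · intro x y hy
    by_cases hx : x ∈ Set.Icc a b
    · rw [RI_in hx] at hy
      have hcont : Continuous (fun z => ((g z : ℝ) : EReal)) :=
        continuous_coe_real_ereal.comp (cont_of_lip hl)
      filter_upwards [hcont.continuousAt.eventually (lt_mem_nhds hy)] with z hz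
      exact lt_of_lt_of_le hz (RI_ge g a b z)
    · rw [RI_out hx] at hy
      filter_upwards [isClosed_Icc.isOpen_compl.mem_nhds hx] with z hz
      rw [RI_out hz]; exact hy
  · exact ⟨a, by rw [RI_in ⟨le_rfl, hab⟩]; exact EReal.coe_ne_top _⟩
  · rw [RI_edom]; exact isCompact_Icc

lemma RI_congr {g h : ℝ → ℝ} {a b : ℝ} (H : Set.EqOn g h (Set.Icc a b)) :
    RI g a b = RI h a b := by
  ext x
  by_cases hx : x ∈ Set.Icc a b
  · rw [RI_in hx, RI_in hx, H hx]
  · rw [RI_out hx, RI_out hx]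

lemma Z_single (Z : (ℝ → EReal) → ℝ)
    (hsimple : ∀ u : ℝ → EReal, IsLC u → (∃ x : ℝ, edom u = {x}) → Z u = 0)
    {g : ℝ → ℝ} {L : ℝ} (hL : 0 < L) (hl : ∀ x y, |g x - g y| ≤ L * |x - y|)
    (hc : ConvexOn ℝ Set.univ g) (p : ℝ) : Z (RI g p p) = 0 :=
  hsimple _ (RI_LC hL hl hc le_rfl) ⟨p, by rw [RI_edom, Set.Icc_self]⟩

lemma Z_split (Z : (ℝ → EReal) → ℝ) (hval : IsVal Z)
    (hsimple : ∀ u : ℝ → EReal, IsLC u → (∃ x : ℝ, edom u = {x}) → Z u = 0)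
    {g : ℝ → ℝ} {L : ℝ} (hL : 0 < L) (hl : ∀ x y, |g x - g y| ≤ L * |x - y|)
    (hc : ConvexOn ℝ Set.univ g) {a p b : ℝ} (hap : a ≤ p) (hpb : p ≤ b) :
    Z (RI g a b) = Z (RI g a p) + Z (RI g p b) := by
  have e1 : (fun x => min (RI g a p x) (RI g p b x)) = RI g a b := by
    ext x
    by_cases h1 : x ∈ Set.Icc a p <;> by_cases h2 : x ∈ Set.Icc p b
    · rw [RI_in h1, RI_in h2, RI_in ⟨h1.1, h2.2⟩, min_self]
    · rw [RI_in h1, RI_out h2, RI_in ⟨h1.1, h1.2.trans hpb⟩, min_top_right]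
    · rw [RI_out h1, RI_in h2, RI_in ⟨hap.trans h2.1, h2.2⟩, min_top_left]
    · rw [RI_out h1, RI_out h2, RI_out, min_self]
      intro h
      rcases le_total x p with hh | hh
      · exact h1 ⟨h.1, hh⟩
      · exact h2 ⟨hh, h.2⟩
  have e2 : (fun x => max (RI g a p x) (RI g p b x)) = RI g p p := by
    ext x
    by_cases h1 : x ∈ Set.Icc a p <;> by_cases h2 : x ∈ Set.Icc p b
    · rw [RI_in h1, RI_in h2, RI_in ⟨h2.1, h1.2⟩, max_self]
    · rw [RI_in h1, RI_out h2, RI_out, max_top_right]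
      exact fun h => h2 ⟨h.1, h.2.trans hpb⟩
    · rw [RI_out h1, RI_in h2, RI_out, max_top_left]
      exact fun h => h1 ⟨hap.trans h.1, h.2⟩
    · rw [RI_out h1, RI_out h2, RI_out, max_self]
      exact fun h => h2 ⟨h.1, h.2.trans hpb⟩
  have := hval _ _ (RI_LC hL hl hc hap) (RI_LC hL hl hc hpb)
    (by rw [e1]; exact RI_LC hL hl hc (hap.trans hpb))
  rw [e1, e2, Z_single Z hsimple hL hl hc] at this
  linarith

lemma eInd_eq (a b : ℝ) : eIndicator (Set.Icc a b) = RI (fun _ => 0) a b := by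
  ext x
  by_cases h : x ∈ Set.Icc a b
  · rw [RI_in h]; simp only [eIndicator]; rw [if_pos h]; rfl
  · rw [RI_out h]; simp only [eIndicator]; rw [if_neg h]

lemma Z_affine (Z : (ℝ → EReal) → ℝ) (hdual : DualTransInv Z)
    (hvanish : ∀ a b : ℝ, a ≤ b → Z (eIndicator (Set.Icc a b)) = 0) (s c : ℝ)
    {a b : ℝ} (hab : a ≤ b) : Z (RI (fun x => s * x + c) a b) = 0 := by
  have h0 : IsLC (RI (fun _ => (0 : ℝ)) a b) :=
    RI_LC one_pos (by intro x y; simp) (convexOn_const 0 convex_univ) hab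
  have := hdual _ h0 (LinearMap.mul ℝ ℝ s) c
  rw [← eInd_eq, hvanish a b hab, eInd_eq] at this
  rw [← this]
  congr 1
  ext x
  by_cases h : x ∈ Set.Icc a b
  · rw [RI_in h, RI_in h]; simp
  · rw [RI_out h, RI_out h, EReal.top_add_coe]

lemma affine_lip {s L c : ℝ} (hs : |s| ≤ L) (x y : ℝ) :
    |(s * x + c) - (s * y + c)| ≤ L * |x - y| := by
  have : (s * x + c) - (s * y + c) = s * (x - y) := by ring
  rw [this, abs_mul]
  gcongr

lemma affine_convex (s c : ℝ) : ConvexOn ℝ Set.univ (fun x : ℝ => s * x + c) := by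
  refine ⟨convex_univ, fun x _ y _ p q _ _ hpq => le_of_eq ?_⟩
  simp only [smul_eq_mul]
  linear_combination (-c) * hpq

lemma affine_concave (s c : ℝ) : ConcaveOn ℝ Set.univ (fun x : ℝ => s * x + c) := by
  refine ⟨convex_univ, fun x _ y _ p q _ _ hpq => le_of_eq ?_⟩
  simp only [smul_eq_mul]
  linear_combination c * hpq

lemma max_lip {g h : ℝ → ℝ} {L : ℝ} (hg : ∀ x y, |g x - g y| ≤ L * |x - y|)
    (hh : ∀ x y, |h x - h y| ≤ L * |x - y|) (x y : ℝ) :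
    |max (g x) (h x) - max (g y) (h y)| ≤ L * |x - y| :=
  (abs_max_sub_max_le_max _ _ _ _).trans (max_le (hg x y) (hh x y))

lemma Z_max (Z : (ℝ → EReal) → ℝ) (hval : IsVal Z) (hdual : DualTransInv Z)
    (hsimple : ∀ u : ℝ → EReal, IsLC u → (∃ x : ℝ, edom u = {x}) → Z u = 0)
    (hvanish : ∀ a b : ℝ, a ≤ b → Z (eIndicator (Set.Icc a b)) = 0)
    {g : ℝ → ℝ} {L : ℝ} (hL : 0 < L) (hl : ∀ x y, |g x - g y| ≤ L * |x - y|)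
    (hc : ConvexOn ℝ Set.univ g) (hgood : ∀ a b, a ≤ b → Z (RI g a b) = 0)
    {s c : ℝ} (hs : |s| ≤ L) {a b : ℝ} (hab : a ≤ b) :
    Z (RI (fun x => max (g x) (s * x + c)) a b) = 0 := by
  have hgc := cont_of_lip hl
  have hlc : Continuous (fun x : ℝ => s * x + c) := by fun_prop
  have hml : ∀ x y, |max (g x) (s * x + c) - max (g y) (s * y + c)| ≤ L * |x - y| :=
    max_lip hl (affine_lip hs)
  have hmc : ConvexOn ℝ Set.univ (fun x => max (g x) (s * x + c)) := hc.sup (affine_convex s c)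
  have hmcont := cont_of_lip (g := fun x => max (g x) (s * x + c)) hml
  set S := Set.Icc a b ∩ {x | g x ≤ s * x + c} with hS
  have hcomp : IsCompact S := isCompact_Icc.inter_right (isClosed_le hgc hlc)
  have hconv : Convex ℝ S := by
    refine (convex_Icc a b).inter ?_
    have h1 := (hc.sub (affine_concave s c)).convex_le 0
    have h2 : {x : ℝ | g x ≤ s * x + c} =
        {x : ℝ | x ∈ Set.univ ∧ (g - fun x => s * x + c) x ≤ 0} := by
      ext x
      simp [Set.mem_ofPred_eq]
    rw [h2]; exact h1
  rcases S.eq_empty_or_nonempty with he | hne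
  · rw [RI_congr (h := g)]
    · exact hgood a b hab
    · intro x hx
      apply max_eq_left
      by_contra hcon
      have : x ∈ S := ⟨hx, (not_le.mp hcon).le⟩
      rw [he] at this; exact this
  · obtain ⟨p, hp⟩ := hcomp.exists_isLeast hne
    obtain ⟨q, hq⟩ := hcomp.exists_isGreatest hne
    have hpq : p ≤ q := hp.2 hq.1
    have hap := hp.1.1.1
    have hqb := hq.1.1.2
    have hmid : Z (RI (fun x => max (g x) (s * x + c)) p q) = 0 := by
      rw [RI_congr (h := fun x => s * x + c)]
      · exact Z_affine Z hdual hvanish s c hpq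
      · intro x hx
        exact max_eq_right (hconv.ordConnected.out hp.1 hq.1 hx).2
    have hleft : Z (RI (fun x => max (g x) (s * x + c)) a p) = 0 := by
      rcases eq_or_lt_of_le hap with h | h
      · rw [← h]; exact Z_single Z hsimple hL hml hmc a
      · rw [RI_congr (h := g)]
        · exact hgood a p hap
        · have : Set.EqOn (fun x => max (g x) (s * x + c)) g (Set.Ico a p) := by
            intro x hx
            apply max_eq_left
            by_contra hcon
            have := hp.2 (⟨⟨hx.1, hx.2.le.trans (hpq.trans hqb)⟩, (not_le.mp hcon).le⟩ : x ∈ S)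
            exact absurd hx.2 (not_lt.mpr this)
          have h2 := this.closure hmcont hgc
          rwa [closure_Ico h.ne] at h2
    have hright : Z (RI (fun x => max (g x) (s * x + c)) q b) = 0 := by
      rcases eq_or_lt_of_le hqb with h | h
      · rw [h]; exact Z_single Z hsimple hL hml hmc b
      · rw [RI_congr (h := g)]
        · exact hgood q b hqb
        · have : Set.EqOn (fun x => max (g x) (s * x + c)) g (Set.Ioc q b) := by
            intro x hx
            apply max_eq_left
            by_contra hcon
            have := hq.2 (⟨⟨(hap.trans hpq).trans hx.1.le, hx.2⟩, (not_le.mp hcon).le⟩ : x ∈ S)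
            exact absurd hx.1 (not_lt.mpr this)
          have h2 := this.closure hmcont hgc
          rwa [closure_Ioc h.ne] at h2
    rw [Z_split Z hval hsimple hL hml hmc hap (hpq.trans hqb),
      Z_split Z hval hsimple hL hml hmc hpq hqb, hleft, hmid, hright]
    norm_num

/-- iterated maxima of affine functions -/
def itMax (s c : ℕ → ℝ) : ℕ → ℝ → ℝ
  | 0 => fun x => s 0 * x + c 0
  | n + 1 => fun x => max (itMax s c n x) (s (n + 1) * x + c (n + 1))

lemma itMax_lip {s c : ℕ → ℝ} {L : ℝ} (hs : ∀ n, |s n| ≤ L) (n : ℕ) :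
    ∀ x y, |itMax s c n x - itMax s c n y| ≤ L * |x - y| := by
  induction n with
  | zero => exact affine_lip (hs 0)
  | succ k ih => exact max_lip ih (affine_lip (hs (k + 1)))

lemma itMax_convex (s c : ℕ → ℝ) (n : ℕ) : ConvexOn ℝ Set.univ (itMax s c n) := by
  induction n with
  | zero => exact affine_convex _ _
  | succ k ih => exact ih.sup (affine_convex _ _)

lemma itMax_ge (s c : ℕ → ℝ) (x : ℝ) {i n : ℕ} (h : i ≤ n) : s i * x + c i ≤ itMax s c n x := by
  induction n with
  | zero => obtain rfl : i = 0 := by omega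
            exact le_rfl
  | succ k ih =>
    rcases Nat.lt_or_ge k i with h1 | h1
    · obtain rfl : i = k + 1 := by omega
      exact le_max_right _ _
    · exact (ih h1).trans (le_max_left _ _)

lemma itMax_le (s c : ℕ → ℝ) (x y : ℝ) (h : ∀ i, s i * x + c i ≤ y) (n : ℕ) :
    itMax s c n x ≤ y := by
  induction n with
  | zero => exact h 0
  | succ k ih => exact max_le ih (h _)

lemma itMax_good (Z : (ℝ → EReal) → ℝ) (hval : IsVal Z) (hdual : DualTransInv Z)
    (hsimple : ∀ u : ℝ → EReal, IsLC u → (∃ x : ℝ, edom u = {x}) → Z u = 0)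
    (hvanish : ∀ a b : ℝ, a ≤ b → Z (eIndicator (Set.Icc a b)) = 0)
    {s c : ℕ → ℝ} {L : ℝ} (hL : 0 < L) (hs : ∀ n, |s n| ≤ L) (n : ℕ) :
    ∀ a b, a ≤ b → Z (RI (itMax s c n) a b) = 0 := by
  induction n with
  | zero => intro a b hab; exact Z_affine Z hdual hvanish _ _ hab
  | succ k ih =>
    intro a b hab
    exact Z_max Z hval hdual hsimple hvanish hL (itMax_lip hs k) (itMax_convex s c k) ih
      (hs _) hab

lemma exists_support {f : ℝ → ℝ} {a b L : ℝ} (hf : ConvexOn ℝ (Set.Icc a b) f)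
    (hl : ∀ x ∈ Set.Ioo a b, ∀ y ∈ Set.Ioo a b, |f x - f y| ≤ L * |x - y|)
    {z : ℝ} (hz : z ∈ Set.Ioo a b) :
    ∃ s c : ℝ, |s| ≤ L ∧ (∀ y ∈ Set.Icc a b, s * y + c ≤ f y) ∧ s * z + c = f z := by
  have hzI : z ∈ Set.Icc a b := ⟨hz.1.le, hz.2.le⟩
  set A := (fun y => (f z - f y) / (z - y)) '' Set.Ico a z with hA
  have hub : ∀ w, z < w → w ≤ b → ∀ r ∈ A, r ≤ (f w - f z) / (w - z) := by
    rintro w hw hwb r ⟨y, hy, rfl⟩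
    exact hf.slope_mono_adjacent ⟨hy.1, hy.2.le.trans hzI.2⟩ ⟨hzI.1.trans hw.le, hwb⟩ hy.2 hw
  have hAne : A.Nonempty := ⟨_, a, ⟨le_rfl, hz.1⟩, rfl⟩
  have hAb : BddAbove A := ⟨_, fun r hr => hub b hz.2 le_rfl r hr⟩
  refine ⟨sSup A, f z - sSup A * z, ?_, ?_, by ring⟩
  · rw [abs_le]
    constructor
    · have hm : (a + z) / 2 ∈ Set.Ico a z := ⟨by linarith [hz.1], by linarith [hz.1]⟩
      refine le_trans ?_ (le_csSup hAb ⟨_, hm, rfl⟩)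
      have hpos : 0 < z - (a + z) / 2 := by linarith [hm.2]
      rw [le_div_iff₀ hpos]
      have := hl z hz ((a + z) / 2) ⟨by linarith [hz.1], by linarith [hz.1, hz.2]⟩
      rw [abs_of_pos hpos] at this
      linarith [(abs_le.mp this).1]
    · refine csSup_le hAne fun r hr => ?_
      have hpos : 0 < (z + b) / 2 - z := by linarith [hz.2]
      refine (hub ((z + b) / 2) (by linarith) (by linarith [hz.2]) r hr).trans ?_
      rw [div_le_iff₀ hpos]
      have := hl ((z + b) / 2) ⟨by linarith [hz.1], by linarith [hz.2]⟩ z hz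
      rw [abs_of_pos hpos] at this
      exact (abs_le.mp this).2
  · intro y hy
    rcases lt_trichotomy y z with h | h | h
    · have h1 : (f z - f y) / (z - y) ≤ sSup A := le_csSup hAb ⟨y, ⟨hy.1, h⟩, rfl⟩
      rw [div_le_iff₀ (by linarith)] at h1
      linarith
    · rw [h]; linarith
    · have h1 : sSup A ≤ (f y - f z) / (y - z) := csSup_le hAne (hub y h hy.2)
      rw [le_div_iff₀ (by linarith)] at h1
      linarith

/-- A simple, τ-upper semicontinuous, translation and dually
epi-translation invariant valuation on `LC(ℝ)` that vanishes on indicator functions of closed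
intervals is non-negative. -/
theorem stmt10 (Z : (ℝ → EReal) → ℝ)
    (hval : IsVal Z) (husc : TauUSC Z) (htrans : TransInv Z) (hdual : DualTransInv Z)
    (hsimple : ∀ u : ℝ → EReal, IsLC u → (∃ x : ℝ, edom u = {x}) → Z u = 0)
    (hvanish : ∀ a b : ℝ, a ≤ b → Z (eIndicator (Set.Icc a b)) = 0) :
    ∀ u : ℝ → EReal, IsLC u → 0 ≤ Z u := by
  intro u hu
  have huLC := hu
  obtain ⟨hconv, hlsc, hbot, ⟨x0, hx0⟩, hcomp, L, hL, hlip⟩ := hu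
  have hmem : ∀ x, x ∈ edom u ↔ u x ≠ ⊤ := fun x => by
    simp only [edom, Set.mem_ofPred_eq]; exact lt_top_iff_ne_top
  have hcoe : ∀ x ∈ edom u, u x = (((u x).toReal : ℝ) : EReal) := fun x hx =>
    (EReal.coe_toReal ((hmem x).1 hx) (hbot x)).symm
  have hkey : ∀ x ∈ edom u, ∀ y ∈ edom u, ∀ t : ℝ, 0 < t → t < 1 →
      u (t • x + (1 - t) • y) ≤ ((t * (u x).toReal + (1 - t) * (u y).toReal : ℝ) : EReal) := by
    intro x hx y hy t ht ht1
    have := hconv x y t ht ht1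
    rw [hcoe x hx, hcoe y hy] at this
    exact_mod_cast this
  have hdc : Convex ℝ (edom u) := by
    rw [convex_iff_forall_pos]
    intro x hx y hy p q hp hq hpq
    obtain rfl : q = 1 - p := by linarith
    exact lt_of_le_of_lt (hkey x hx y hy p hp (by linarith)) (EReal.coe_lt_top _)
  have hne : (edom u).Nonempty := ⟨x0, (hmem x0).2 hx0⟩
  obtain ⟨a, ha⟩ := hcomp.exists_isLeast hne
  obtain ⟨b, hb⟩ := hcomp.exists_isGreatest hne
  have hdom : edom u = Set.Icc a b := by
    apply Set.Subset.antisymm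
    · intro x hx; exact ⟨ha.2 hx, hb.2 hx⟩
    · exact hdc.ordConnected.out ha.1 hb.1
  rcases eq_or_lt_of_le (ha.2 hb.1) with hab | hab
  · exact (hsimple u huLC ⟨a, by rw [hdom, ← hab, Set.Icc_self]⟩).ge
  set f : ℝ → ℝ := fun x => (u x).toReal with hf
  have hfconv : ConvexOn ℝ (Set.Icc a b) f := by
    rw [← hdom, convexOn_iff_forall_pos]
    refine ⟨hdc, ?_⟩
    intro x hx y hy p q hp hq hpq
    obtain rfl : q = 1 - p := by linarith
    have h1 := hkey x hx y hy p hp (by linarith)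
    rw [hcoe _ (hdc hx hy hp.le hq.le hpq)] at h1
    exact_mod_cast h1
  have hfl : ∀ x ∈ Set.Ioo a b, ∀ y ∈ Set.Ioo a b, |f x - f y| ≤ L * |x - y| := by
    intro x hx y hy
    rw [← interior_Icc, ← hdom] at hx hy
    exact hlip x hx y hy
  have hfext : ∀ x ∈ Set.Icc a b, ∀ y ∈ Set.Ioo a b, f x ≤ f y + L * |x - y| := by
    intro x hx y hy
    by_contra hcon
    push Not at hcon
    obtain ⟨m, hm1, hm2⟩ := exists_between hcon
    have h1 : ((m : ℝ) : EReal) < u x := by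
      rw [hcoe x (hdom ▸ hx)]; exact_mod_cast hm2
    have e1 := hlsc x _ h1
    have e2 : ∀ᶠ z in 𝓝 x, f y + L * |z - y| < m := by
      have : Continuous (fun z => f y + L * |z - y|) := by fun_prop
      exact this.continuousAt.eventually (gt_mem_nhds hm1)
    have hcl : x ∈ closure (Set.Ioo a b) := by rw [closure_Ioo hab.ne]; exact hx
    obtain ⟨z, ⟨hz1, hz2⟩, hz3⟩ := mem_closure_iff_nhds.1 hcl _ (e1.and e2)
    rw [hcoe z (hdom ▸ ⟨hz3.1.le, hz3.2.le⟩)] at hz1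
    have hz1' : m < f z := by exact_mod_cast hz1
    have := (abs_le.mp (hfl z hz3 y hy)).2
    linarith
  have hch : ∀ n : ℕ, ∃ s c : ℝ, |s| ≤ L ∧ (∀ y ∈ Set.Icc a b, s * y + c ≤ f y) ∧
      (TopologicalSpace.denseSeq ℝ n ∈ Set.Ioo a b →
        s * TopologicalSpace.denseSeq ℝ n + c = f (TopologicalSpace.denseSeq ℝ n)) := by
    intro n
    by_cases h : TopologicalSpace.denseSeq ℝ n ∈ Set.Ioo a b
    · obtain ⟨s, c, h1, h2, h3⟩ := exists_support hfconv hfl h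
      exact ⟨s, c, h1, h2, fun _ => h3⟩
    · have hm : (a + b) / 2 ∈ Set.Ioo a b := ⟨by linarith, by linarith⟩
      obtain ⟨s, c, h1, h2, h3⟩ := exists_support hfconv hfl hm
      exact ⟨s, c, h1, h2, fun h' => absurd h' h⟩
  choose s c hs hle heq using hch
  have hlow : ∀ x ∈ Set.Icc a b, ∀ y, y < f x → ∀ᶠ n in atTop, y < itMax s c n x := by
    intro x hx y hy
    have hcl : x ∈ closure (Set.Ioo a b) := by rw [closure_Ioo hab.ne]; exact hx
    have e2 : {z : ℝ | 2 * L * |x - z| < f x - y} ∈ 𝓝 x := by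
      have : Continuous (fun z => 2 * L * |x - z|) := by fun_prop
      exact this.continuousAt.eventually (gt_mem_nhds (by simpa using hy))
    have ho : IsOpen {z : ℝ | 2 * L * |x - z| < f x - y} := isOpen_lt (by fun_prop) (by fun_prop)
    obtain ⟨i, hi⟩ := (TopologicalSpace.denseRange_denseSeq ℝ).exists_mem_open
      (ho.inter isOpen_Ioo) (mem_closure_iff_nhds.1 hcl _ e2)
    filter_upwards [eventually_ge_atTop i] with n hn
    refine lt_of_lt_of_le ?_ (itMax_ge s c x hn)
    set z := TopologicalSpace.denseSeq ℝ i
    have h1 := hfext x hx z hi.2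
    have h2 := heq i hi.2
    have h3 : 2 * L * |x - z| < f x - y := hi.1
    have h4 : |s i * (x - z)| ≤ L * |x - z| := by
      rw [abs_mul]; gcongr; exact hs i
    have h5 := (abs_le.mp h4).1
    have h6 : s i * x + c i = f z + s i * (x - z) := by rw [← h2]; ring
    rw [h6]; linarith
  have hupp : ∀ x ∈ Set.Icc a b, ∀ n, itMax s c n x ≤ f x := fun x hx n =>
    itMax_le s c x _ (fun i => hle i x hx) n
  have hout : ∀ x, x ∉ Set.Icc a b → u x = ⊤ := by
    intro x hx
    by_contra h
    exact hx (hdom ▸ (hmem x).2 h)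
  have htau : TauConv (fun n => RI (itMax s c n) a b) u := by
    refine ⟨fun n => RI_LC hL (itMax_lip hs n) (itMax_convex s c n) hab.le, huLC, ?_, ?_,
      L, hL, fun n => RI_lip (itMax_lip hs n) a b⟩
    · intro x xk hxk
      by_cases hx : x ∈ Set.Icc a b
      · refine le_of_forall_lt fun y hy => ?_
        rw [hcoe x (hdom ▸ hx)] at hy
        obtain ⟨m, hm1, hm2⟩ := EReal.lt_iff_exists_real_btwn.1 hy
        have hm2' : m < f x := by exact_mod_cast hm2
        refine lt_of_lt_of_le hm1 (le_liminf_of_le (by isBoundedDefault) ?_)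
        obtain ⟨m', h1, h2⟩ := exists_between hm2'
        have e3 : ∀ᶠ n in atTop, L * |x - xk n| < m' - m := by
          have : Continuous (fun z => L * |x - z|) := by fun_prop
          exact hxk.eventually (this.continuousAt.eventually (gt_mem_nhds (by simpa using h1)))
        filter_upwards [hlow x hx m' h2, e3] with n hn1 hn2
        refine le_trans ?_ (RI_ge _ a b _)
        have := (abs_le.mp (itMax_lip (c := c) hs n x (xk n))).2
        exact_mod_cast (by linarith : m ≤ itMax s c n (xk n))
      · have : ∀ᶠ n in atTop, xk n ∈ (Set.Icc a b)ᶜ :=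
          hxk.eventually (isClosed_Icc.isOpen_compl.mem_nhds hx)
        refine le_trans le_top (le_liminf_of_le (by isBoundedDefault) ?_)
        filter_upwards [this] with n hn
        rw [RI_out hn]
    · intro x
      refine ⟨fun _ => x, tendsto_const_nhds, ?_⟩
      by_cases hx : x ∈ Set.Icc a b
      · simp only [RI_in hx]
        rw [hcoe x (hdom ▸ hx)]
        refine (continuous_coe_real_ereal.tendsto _).comp ?_
        rw [tendsto_order]
        refine ⟨fun y hy => hlow x hx y hy, fun y hy => Eventually.of_forall fun n => ?_⟩
        exact lt_of_le_of_lt (hupp x hx n) hy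
      · simp only [RI_out hx, hout x hx]
        exact tendsto_const_nhds
  have hfin := husc _ _ htau
  have hz : (fun k => Z (RI (itMax s c k) a b)) = fun _ => (0 : ℝ) := by
    ext k
    exact itMax_good Z hval hdual hsimple hvanish hL hs k a b hab.le
  rw [hz, limsup_const] at hfin
  exact hfin

end
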